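/- Let f_i(x) = a_i x + b_i (i = 1, 2, 3, 4) be monotone nondecreasing linear functions, none of which is the identity, with 0 ≤ a_1, a_3 < 1 and a_2, a_4 ≥ 1. If γ(f_1) ≥ γ(f_2) ≥ γ(f_3) ≥ γ(f_4), then for every x ∈ ℝ, f_4∘f_3∘f_2∘f_1(x) ≤ max{ f_4∘f_1∘f_3∘f_2(x), f_3∘f_2∘f_4∘f_1(x) }. -/

import Mathlib

/-- `γ` of the linear function `x ↦ a x + b`: the fixed point `b / (1 - a)` if `a ≠ 1`,
`+∞` if `a = 1` and `b < 0`, `-∞` if `a = 1` and `b ≥ 0`. -/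
noncomputable def gam (a b : ℝ) : EReal :=
  if a = 1 then (if b < 0 then (⊤ : EReal) else (⊥ : EReal))
  else ((b / (1 - a) : ℝ) : EReal)

/-!
Write `fᵢ x = aᵢ x + bᵢ` and `g = f₃ ∘ f₂`, of slope `a`. There is a point `p` with `g p ≤ p`,
`p ≤ f₁ p` and `p ≤ f₄ p`: the fixed point of `f₃` if `a₃ ≥ 0`, that of `f₁` if `a₃ ≤ 0`. The
commutator of two affine maps is constant and can be read off from their displacements at `p`. If
`a ≤ 1`, then `g` and `f₁` both have slope at most `1`, and it gives `g ∘ f₁ ≤ f₁ ∘ g`; if `a ≥ 1`,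
then `f₄` and `g` both have slope at least `1`, and it gives `f₄ ∘ g ≤ g ∘ f₄`.
-/

section Commutation

variable {R : Type*} [CommRing R]

lemma affine_comp_sub_comp (a b c d p x : R) :
    (a * (c * x + d) + b) - (c * (a * x + b) + d) =
      (1 - c) * (a * p + b - p) - (1 - a) * (c * p + d - p) := by
  ring

lemma affine_comp_le_comp_of_le_one [PartialOrder R] [IsOrderedRing R] {a b c d p : R}
    (ha : a ≤ 1) (hc : c ≤ 1) (hab : a * p + b ≤ p) (hcd : p ≤ c * p + d) (x : R) :
    a * (c * x + d) + b ≤ c * (a * x + b) + d := by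
  rw [← sub_nonpos, affine_comp_sub_comp a b c d p x, sub_nonpos]
  calc (1 - c) * (a * p + b - p)
      ≤ 0 := mul_nonpos_of_nonneg_of_nonpos (sub_nonneg.2 hc) (sub_nonpos.2 hab)
    _ ≤ (1 - a) * (c * p + d - p) := mul_nonneg (sub_nonneg.2 ha) (sub_nonneg.2 hcd)

lemma affine_comp_le_comp_of_one_le [PartialOrder R] [IsOrderedRing R] {a b c d p : R}
    (ha : 1 ≤ a) (hc : 1 ≤ c) (hab : p ≤ a * p + b) (hcd : c * p + d ≤ p) (x : R) :
    a * (c * x + d) + b ≤ c * (a * x + b) + d := by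
  rw [← sub_nonpos, affine_comp_sub_comp a b c d p x, sub_nonpos]
  calc (1 - c) * (a * p + b - p)
      ≤ 0 := mul_nonpos_of_nonpos_of_nonneg (sub_nonpos.2 hc) (sub_nonneg.2 hab)
    _ ≤ (1 - a) * (c * p + d - p) :=
      mul_nonneg_of_nonpos_of_nonpos (sub_nonpos.2 ha) (sub_nonpos.2 hcd)

lemma affine_comp_comp_le_max [LinearOrder R] [IsOrderedRing R] {a₁ b₁ a b a₄ b₄ p : R}
    (ha₁ : a₁ ≤ 1) (ha₄ : 1 ≤ a₄) (h₁ : p ≤ a₁ * p + b₁) (h : a * p + b ≤ p)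
    (h₄ : p ≤ a₄ * p + b₄) (x : R) :
    a₄ * (a * (a₁ * x + b₁) + b) + b₄ ≤
      max (a₄ * (a₁ * (a * x + b) + b₁) + b₄) (a * (a₄ * (a₁ * x + b₁) + b₄) + b) := by
  rcases le_total a 1 with ha | ha
  · have ha₄_nonneg : 0 ≤ a₄ := zero_le_one.trans ha₄
    have hcomm : a * (a₁ * x + b₁) + b ≤ a₁ * (a * x + b) + b₁ :=
      affine_comp_le_comp_of_le_one ha ha₁ h h₁ x
    exact le_max_of_le_left (by gcongr)
  · exact le_max_of_le_right (affine_comp_le_comp_of_one_le ha₄ ha h₄ h _)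

end Commutation

section Gam

variable {a b c : ℝ}

lemma gam_of_ne_one (ha : a ≠ 1) : gam a b = ((b / (1 - a) : ℝ) : EReal) :=
  if_neg ha

lemma gam_le_coe_iff_of_lt_one (ha : a < 1) : gam a b ≤ (c : EReal) ↔ a * c + b ≤ c := by
  rw [gam_of_ne_one ha.ne, EReal.coe_le_coe_iff, div_le_iff₀ (sub_pos.2 ha)]
  constructor <;> intro h <;> linarith

lemma coe_le_gam_iff_of_lt_one (ha : a < 1) : (c : EReal) ≤ gam a b ↔ c ≤ a * c + b := by
  rw [gam_of_ne_one ha.ne, EReal.coe_le_coe_iff, le_div_iff₀ (sub_pos.2 ha)]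
  constructor <;> intro h <;> linarith

lemma gam_le_coe_iff_of_one_le (ha : 1 ≤ a) : gam a b ≤ (c : EReal) ↔ c ≤ a * c + b := by
  rcases ha.eq_or_lt with rfl | ha
  · rcases lt_or_ge b 0 with hb | hb
    · simp [gam, hb]
    · simp [gam, hb, hb.not_gt]
  · rw [gam_of_ne_one ha.ne', EReal.coe_le_coe_iff, div_le_iff_of_neg (sub_neg.2 ha)]
    constructor <;> intro h <;> linarith

/-- The converse fails for the identity, since `gam 1 0 = ⊥`. -/
lemma map_le_of_coe_le_gam (ha : 1 ≤ a) (h : (c : EReal) ≤ gam a b) : a * c + b ≤ c := by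
  rcases ha.eq_or_lt with rfl | ha
  · have hb : b < 0 := by
      by_contra hb
      simp [gam, hb] at h
    linarith
  · rw [gam_of_ne_one ha.ne', EReal.coe_le_coe_iff, le_div_iff_of_neg (sub_neg.2 ha)] at h
    linarith

end Gam

lemma exists_map_le_and_le_map {a1 b1 a2 b2 a3 b3 a4 b4 : ℝ}
    (ha1 : a1 < 1) (ha3 : a3 < 1) (ha2 : 1 ≤ a2) (ha4 : 1 ≤ a4)
    (h21 : gam a2 b2 ≤ gam a1 b1) (h32 : gam a3 b3 ≤ gam a2 b2)
    (h43 : gam a4 b4 ≤ gam a3 b3) :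
    ∃ p, a3 * (a2 * p + b2) + b3 ≤ p ∧ p ≤ a1 * p + b1 ∧ p ≤ a4 * p + b4 := by
  suffices ∃ p : ℝ, a3 * (a2 * p + b2) ≤ a3 * p ∧
      gam a3 b3 ≤ (p : EReal) ∧ (p : EReal) ≤ gam a1 b1 by
    obtain ⟨p, hp, h3p, hp1⟩ := this
    have hp3 : a3 * p + b3 ≤ p := (gam_le_coe_iff_of_lt_one ha3).1 h3p
    exact ⟨p, by linarith, (coe_le_gam_iff_of_lt_one ha1).1 hp1,
      (gam_le_coe_iff_of_one_le ha4).1 (h43.trans h3p)⟩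
  have h31 : gam a3 b3 ≤ gam a1 b1 := h32.trans h21
  rcases le_total 0 a3 with h | h
  · have hp : gam a3 b3 = ((b3 / (1 - a3) : ℝ) : EReal) := gam_of_ne_one ha3.ne
    exact ⟨_, mul_le_mul_of_nonneg_left (map_le_of_coe_le_gam ha2 (hp ▸ h32)) h,
      hp.le, hp ▸ h31⟩
  · have hp : gam a1 b1 = ((b1 / (1 - a1) : ℝ) : EReal) := gam_of_ne_one ha1.ne
    exact ⟨_, mul_le_mul_of_nonpos_left ((gam_le_coe_iff_of_one_le ha2).1 (hp ▸ h21)) h,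
      hp ▸ h31, hp.ge⟩

theorem stmt12_general (a1 b1 a2 b2 a3 b3 a4 b4 : ℝ)
    (ha1 : a1 < 1) (ha3 : a3 < 1) (ha2 : 1 ≤ a2) (ha4 : 1 ≤ a4)
    (h21 : gam a2 b2 ≤ gam a1 b1) (h32 : gam a3 b3 ≤ gam a2 b2)
    (h43 : gam a4 b4 ≤ gam a3 b3) :
    ∀ x : ℝ,
      a4 * (a3 * (a2 * (a1 * x + b1) + b2) + b3) + b4 ≤
        max (a4 * (a1 * (a3 * (a2 * x + b2) + b3) + b1) + b4)
          (a3 * (a2 * (a4 * (a1 * x + b1) + b4) + b2) + b3) := by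
  intro x
  obtain ⟨p, hp, hp1, hp4⟩ := exists_map_le_and_le_map ha1 ha3 ha2 ha4 h21 h32 h43
  have hcomp (y : ℝ) : a3 * (a2 * y + b2) + b3 = a3 * a2 * y + (a3 * b2 + b3) := by ring
  rw [hcomp] at hp
  simpa only [hcomp] using affine_comp_comp_le_max ha1.le ha4 hp1 hp hp4 x

/-- For non-identity monotone linear `fᵢ(x) = aᵢx + bᵢ` with `0 ≤ a₁, a₃ < 1`,
`a₂, a₄ ≥ 1` and `γ(f₁) ≥ γ(f₂) ≥ γ(f₃) ≥ γ(f₄)`: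
`f₄∘f₃∘f₂∘f₁ ≤ max (f₄∘f₁∘f₃∘f₂) (f₃∘f₂∘f₄∘f₁)` pointwise. -/
theorem stmt12 (a1 b1 a2 b2 a3 b3 a4 b4 : ℝ)
    (ha1 : 0 ≤ a1) (ha1' : a1 < 1) (ha3 : 0 ≤ a3) (ha3' : a3 < 1)
    (ha2 : 1 ≤ a2) (ha4 : 1 ≤ a4)
    (hn1 : (a1, b1) ≠ (1, 0)) (hn2 : (a2, b2) ≠ (1, 0))
    (hn3 : (a3, b3) ≠ (1, 0)) (hn4 : (a4, b4) ≠ (1, 0))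
    (h21 : gam a2 b2 ≤ gam a1 b1) (h32 : gam a3 b3 ≤ gam a2 b2)
    (h43 : gam a4 b4 ≤ gam a3 b3) :
    ∀ x : ℝ,
      a4 * (a3 * (a2 * (a1 * x + b1) + b2) + b3) + b4 ≤
        max (a4 * (a1 * (a3 * (a2 * x + b2) + b3) + b1) + b4)
          (a3 * (a2 * (a4 * (a1 * x + b1) + b4) + b2) + b3) := by
  exact stmt12_general a1 b1 a2 b2 a3 b3 a4 b4 ha1' ha3' ha2 ha4 h21 h32 h43
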